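/- For every n ≥ 1 and all primitive instructions u_1, …, u_n, the thread extracted from the repetition-free program u_1;…;u_n equals the thread extracted from u_1;…;u_n;(#0)^ω, i.e., |u_1;…;u_n| = |u_1;…;u_n;(#0)^ω|. -/

import Mathlib

/-- Primitive instructions over a set `A` of basic instructions:
basic instructions `a`, positive tests `+a`, negative tests `-a`,
jump instructions `#k` and the termination instruction `!`. -/
inductive PrimInstr (A : Type) : Type where
  | basic (a : A)
  | pos (a : A)
  | neg (a : A)
  | jump (k : Nat)
  | halt
deriving DecidableEq

/-- PGA-programs over `A`: primitive instructions, concatenation `X;Y`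
and repetition `X^ω`. -/
inductive PGA (A : Type) : Type where
  | prim (u : PrimInstr A)
  | seq (X Y : PGA A)
  | rep (X : PGA A)
deriving DecidableEq

/-- A SPI: a nonempty finite (list) or infinite (function) sequence of primitive
instructions.  (Nonemptiness always holds for denotations of PGA-programs.) -/
abbrev SPI (A : Type) : Type := List (PrimInstr A) ⊕ (ℕ → PrimInstr A)

/-- Concatenation of SPIs; if the first one is infinite, it is the result. -/
def SPI.seqc {A : Type} : SPI A → SPI A → SPI A
  | .inl l, .inl l' => .inl (l ++ l')
  | .inl l, .inr s => .inr fun n => if h : n < l.length then l.get ⟨n, h⟩ else s (n - l.length)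
  | .inr s, _ => .inr s

/-- Infinite repetition of a SPI; an infinite SPI is its own repetition.
(The `getD`-default is never relevant: SPIs of PGA-programs are nonempty.) -/
def SPI.omega {A : Type} : SPI A → SPI A
  | .inl l => .inr fun n => l.getD (n % l.length) .halt
  | .inr s => .inr s

/-- The SPI denoted by a PGA-program. -/
def PGA.spi {A : Type} : PGA A → SPI A
  | .prim u => .inl [u]
  | .seq X Y => X.spi.seqc Y.spi
  | .rep X => X.spi.omega

/-- The instruction of a SPI at a (0-based) position, if any. -/
def SPI.at? {A : Type} : SPI A → ℕ → Option (PrimInstr A)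
  | .inl l, n => l[n]?
  | .inr s, n => some (s n)

/-- The polynomial functor `X ↦ {S} ⊕ {D} ⊕ A × X × X` whose final coalgebra
is the type of threads. -/
def ThreadF (A : Type) : PFunctor.{0} :=
  ⟨Unit ⊕ Unit ⊕ A, fun s => match s with
    | .inl _ => Empty
    | .inr (.inl _) => Empty
    | .inr (.inr _) => Bool⟩

/-- Threads over `A`: the final coalgebra (coinductive type) generated by
termination `S`, deadlock `D` and postconditional composition. -/
def ThreadT (A : Type) : Type := PFunctor.M (ThreadF A)

/-- The terminating thread `S`. -/
def ThreadT.S {A : Type} : ThreadT A := PFunctor.M.mk ⟨Sum.inl (), Empty.elim⟩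

/-- The deadlocking (inactive) thread `D`. -/
def ThreadT.D {A : Type} : ThreadT A := PFunctor.M.mk ⟨Sum.inr (Sum.inl ()), Empty.elim⟩

/-- Postconditional composition `P ⊴ a ⊵ Q` (continue as `P` on reply `true`
to `a`, as `Q` on reply `false`).  Action prefix `a ∘ P` is `P ⊴ a ⊵ P`. -/
def ThreadT.post {A : Type} (a : A) (P Q : ThreadT A) : ThreadT A :=
  PFunctor.M.mk ⟨Sum.inr (Sum.inr a), fun b => match b with | true => P | false => Q⟩

/-- The size of a proper jump instruction (`#m` with `m ≥ 1`), if any. -/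
def jumpSize {A : Type} : Option (PrimInstr A) → Option ℕ
  | some (.jump (m+1)) => some (m+1)
  | _ => none

/-- Following the chain of (proper) jumps of `σ` starting at position `j`. -/
def jchain {A : Type} (σ : ℕ → Option (PrimInstr A)) (j : ℕ) : ℕ → ℕ
  | 0 => j
  | k+1 =>
    match jumpSize (σ (jchain σ j k)) with
    | some m => jchain σ j k + m
    | none => jchain σ j k

open Classical in
/-- One step of thread extraction at position `j` of the instruction sequence `σ`:
first resolve the chain of jumps from `j` (an infinite chain of jumps yields
deadlock `D`, as does jumping outside of the sequence or reaching `#0`), then read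
off the instruction: `!` gives `S`, a basic instruction `a` gives action prefix
with both continuations at the next position, a positive (negative) test gives
postconditional composition continuing at the next position upon `true` (`false`)
and at the position thereafter upon `false` (`true`). -/
noncomputable def xstep {A : Type} (σ : ℕ → Option (PrimInstr A)) (j : ℕ) :
    (ThreadF A).Obj ℕ :=
  haveI : DecidablePred fun k => jumpSize (σ (jchain σ j k)) = none := fun _ => inferInstance
  if h : ∃ k, jumpSize (σ (jchain σ j k)) = none then
    let j' := jchain σ j (Nat.find h)
    match σ j' with
    | some .halt => ⟨Sum.inl (), Empty.elim⟩
    | some (.basic a) => ⟨Sum.inr (Sum.inr a), fun _ => j' + 1⟩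
    | some (.pos a) => ⟨Sum.inr (Sum.inr a), fun b => match b with | true => j' + 1 | false => j' + 2⟩
    | some (.neg a) => ⟨Sum.inr (Sum.inr a), fun b => match b with | true => j' + 2 | false => j' + 1⟩
    | _ => ⟨Sum.inr (Sum.inl ()), Empty.elim⟩
  else ⟨Sum.inr (Sum.inl ()), Empty.elim⟩

/-- Thread extraction from an instruction-lookup function, starting at
(0-based) position `j₀`. -/
noncomputable def extractFrom {A : Type} (σ : ℕ → Option (PrimInstr A)) (j₀ : ℕ) : ThreadT A :=
  PFunctor.M.corec (xstep σ) j₀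

/-- Thread extraction `|X|` on PGA-programs: extraction along the SPI denoted
by `X`, starting at its first instruction.  This realizes exactly the defining
equations of thread extraction (Table 2 of the paper). -/
noncomputable def PGA.thread {A : Type} (X : PGA A) : ThreadT A :=
  extractFrom X.spi.at? 0

/-- `fromL u [v_1, …, v_n]` is the repetition-free program `u ; v_1 ; … ; v_n`. -/
def fromL {A : Type} : PrimInstr A → List (PrimInstr A) → PGA A
  | u, [] => .prim u
  | u, v :: l => (PGA.prim u).seq (fromL v l)

/-! One step of thread extraction follows jumps of positive size until it meets something else, and
then acts on what it finds. Neither part distinguishes a missing instruction from `#0`: both stop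
the chain of jumps, and both yield deadlock. So filling every position beyond the end of a program
with `#0` leaves the coalgebra of extraction steps unchanged. -/

section ProgramEnd

variable {A : Type}

theorem SPI.omega_singleton (v : PrimInstr A) : SPI.omega (.inl [v]) = .inr fun _ => v := by
  simp [SPI.omega, Nat.mod_one]

theorem SPI.at?_seqc_const (X : SPI A) (v : PrimInstr A) :
    (X.seqc (.inr fun _ => v)).at? = fun n => some ((X.at? n).getD v) := by
  funext n
  rcases X with l | s
  · by_cases hn : n < l.length <;> simp [SPI.seqc, SPI.at?, hn]
  · rfl

theorem jumpSize_some_getD_jump_zero (i : Option (PrimInstr A)) :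
    jumpSize (some (i.getD (.jump 0))) = jumpSize i := by
  cases i <;> rfl

/-- The observable behaviour of the instruction `i` found at position `j`: termination, deadlock,
or a basic action together with the positions at which extraction continues. A missing instruction
and `#0` give deadlock; so do jumps of positive size, an irrelevant value since extraction resolves
them before it looks at the instruction. -/
def stepAt (i : Option (PrimInstr A)) (j : ℕ) : (ThreadF A).Obj ℕ :=
  match i with
  | some .halt => ⟨Sum.inl (), Empty.elim⟩
  | some (.basic a) => ⟨Sum.inr (Sum.inr a), fun _ => j + 1⟩
  | some (.pos a) => ⟨Sum.inr (Sum.inr a), fun b => match b with | true => j + 1 | false => j + 2⟩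
  | some (.neg a) => ⟨Sum.inr (Sum.inr a), fun b => match b with | true => j + 2 | false => j + 1⟩
  | _ => ⟨Sum.inr (Sum.inl ()), Empty.elim⟩

theorem stepAt_some_getD_jump_zero (i : Option (PrimInstr A)) :
    stepAt (some (i.getD (.jump 0))) = stepAt i := by
  cases i <;> rfl

theorem jchain_congr {σ τ : ℕ → Option (PrimInstr A)}
    (h : ∀ n, jumpSize (σ n) = jumpSize (τ n)) : jchain σ = jchain τ := by
  funext j k
  induction k with
  | zero => rfl
  | succ k ih => simp only [jchain, h, ih]

theorem jchain_eq_of_jumpSize_eq_none {σ : ℕ → Option (PrimInstr A)} {j k m : ℕ}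
    (hk : jumpSize (σ (jchain σ j k)) = none) (hkm : k ≤ m) : jchain σ j m = jchain σ j k := by
  induction m, hkm using Nat.le_induction with
  | base => rfl
  | succ m _ ih => simp only [jchain, ih, hk]

theorem xstep_eq_stepAt {σ : ℕ → Option (PrimInstr A)} {j k : ℕ}
    (hk : jumpSize (σ (jchain σ j k)) = none) :
    xstep σ j = stepAt (σ (jchain σ j k)) (jchain σ j k) := by
  classical
  have hex : ∃ k, jumpSize (σ (jchain σ j k)) = none := ⟨k, hk⟩
  rw [jchain_eq_of_jumpSize_eq_none (Nat.find_spec hex) (Nat.find_min' hex hk)]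
  exact dif_pos hex

theorem xstep_eq_deadlock {σ : ℕ → Option (PrimInstr A)} {j : ℕ}
    (h : ¬∃ k, jumpSize (σ (jchain σ j k)) = none) :
    xstep σ j = ⟨Sum.inr (Sum.inl ()), Empty.elim⟩ :=
  dif_neg h

theorem xstep_congr {σ τ : ℕ → Option (PrimInstr A)}
    (hjump : ∀ n, jumpSize (σ n) = jumpSize (τ n)) (hstep : ∀ n, stepAt (σ n) = stepAt (τ n)) :
    xstep σ = xstep τ := by
  funext j
  have hchain : jchain σ = jchain τ := jchain_congr hjump
  by_cases hτ : ∃ k, jumpSize (τ (jchain τ j k)) = none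
  · obtain ⟨k, hk⟩ := hτ
    have hσ : jumpSize (σ (jchain σ j k)) = none := by rw [hjump, hchain, hk]
    rw [xstep_eq_stepAt hσ, xstep_eq_stepAt hk, hstep, hchain]
  · have hσ : ¬∃ k, jumpSize (σ (jchain σ j k)) = none := by simpa only [hjump, hchain] using hτ
    rw [xstep_eq_deadlock hσ, xstep_eq_deadlock hτ]

theorem extractFrom_some_getD_jump_zero (σ : ℕ → Option (PrimInstr A)) :
    extractFrom (fun n => some ((σ n).getD (.jump 0))) = extractFrom σ := by
  unfold extractFrom
  rw [xstep_congr (fun n => jumpSize_some_getD_jump_zero (σ n))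
    fun n => stepAt_some_getD_jump_zero (σ n)]

theorem thread_extraction_pad_zero_general (X : PGA A) :
    X.thread = (X.seq (PGA.rep (.prim (.jump 0)))).thread := by
  simp only [PGA.thread, PGA.spi, SPI.omega_singleton, SPI.at?_seqc_const,
    extractFrom_some_getD_jump_zero]

end ProgramEnd

/-- For all primitive instructions `u_1, …, u_n` (`n ≥ 1`):
`|u_1 ; … ; u_n| = |u_1 ; … ; u_n ; (#0)^ω|`. -/
theorem thread_extraction_pad_zero (A : Type) (u : PrimInstr A)
    (us : List (PrimInstr A)) :
    (fromL u us).thread = ((fromL u us).seq (PGA.rep (.prim (.jump 0)))).thread :=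
  thread_extraction_pad_zero_general (fromL u us)
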